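/- For all nonnegative integers n and k, the number of matchings in M_n^k(213) equals the number of pairs (D_0, D_1) of Dyck paths of semilength n+k such that D_0 lies weakly below D_1 and both D_0 and D_1 end with k consecutive south steps. (In the paper this is realized by an explicit bijection.) -/

import Mathlib

/-! ### Patterns of length 3 and 4 as permutations (0-indexed values) -/

def p123 : Equiv.Perm (Fin 3) :=
  ⟨![0,1,2], ![0,1,2], by intro x; fin_cases x <;> rfl, by intro x; fin_cases x <;> rfl⟩
def p132 : Equiv.Perm (Fin 3) :=
  ⟨![0,2,1], ![0,2,1], by intro x; fin_cases x <;> rfl, by intro x; fin_cases x <;> rfl⟩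
def p213 : Equiv.Perm (Fin 3) :=
  ⟨![1,0,2], ![1,0,2], by intro x; fin_cases x <;> rfl, by intro x; fin_cases x <;> rfl⟩
def p231 : Equiv.Perm (Fin 3) :=
  ⟨![1,2,0], ![2,0,1], by intro x; fin_cases x <;> rfl, by intro x; fin_cases x <;> rfl⟩
def p312 : Equiv.Perm (Fin 3) :=
  ⟨![2,0,1], ![1,2,0], by intro x; fin_cases x <;> rfl, by intro x; fin_cases x <;> rfl⟩
def p321 : Equiv.Perm (Fin 3) :=
  ⟨![2,1,0], ![2,1,0], by intro x; fin_cases x <;> rfl, by intro x; fin_cases x <;> rfl⟩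
def p1342 : Equiv.Perm (Fin 4) :=
  ⟨![0,2,3,1], ![0,3,1,2], by intro x; fin_cases x <;> rfl, by intro x; fin_cases x <;> rfl⟩
def p1324 : Equiv.Perm (Fin 4) :=
  ⟨![0,2,1,3], ![0,2,1,3], by intro x; fin_cases x <;> rfl, by intro x; fin_cases x <;> rfl⟩

/-! ### Perfect matchings of `[2n] = {1, …, 2n}` as finsets of pairs `(i,j)`, `i < j` -/

/-- `M` is a perfect matching of `{1, …, 2n}`. -/
def IsPerfectMatching (n : ℕ) (M : Finset (ℕ × ℕ)) : Prop :=
  (∀ p ∈ M, p.1 < p.2 ∧ 1 ≤ p.1 ∧ p.2 ≤ 2 * n) ∧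
  ∀ x, 1 ≤ x → x ≤ 2 * n → ∃! p, p ∈ M ∧ (p.1 = x ∨ p.2 = x)

/-- The matching `M` contains the pattern `τ ∈ S_k`: there are
`i_1 < i_2 < ⋯ < i_{2k}` with `(i_a, i_{2k+1-τ(a)}) ∈ M` for all `1 ≤ a ≤ k`
(written here 0-indexed). -/
def MatchContains {k : ℕ} (τ : Equiv.Perm (Fin k)) (M : Finset (ℕ × ℕ)) : Prop :=
  ∃ f : Fin (2 * k) → ℕ, StrictMono f ∧
    ∀ a : Fin k,
      (f ⟨a.1, by have := a.isLt; omega⟩,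
       f ⟨2 * k - 1 - (τ a).1, by have := (τ a).isLt; omega⟩) ∈ M

def MatchAvoids {k : ℕ} (τ : Equiv.Perm (Fin k)) (M : Finset (ℕ × ℕ)) : Prop :=
  ¬ MatchContains τ M

/-! ### Dyck paths as lists of booleans (`true` = east step, `false` = south step) -/

/-- A Dyck path of semilength `n`, from `(0,n)` to `(n,0)`, staying weakly above `y = n - x`. -/
def IsDyckPath (n : ℕ) (t : List Bool) : Prop :=
  t.length = 2 * n ∧ t.count true = n ∧
  ∀ i, (t.take i).count false ≤ (t.take i).count true

/-- The height (distance above the diagonal) of the `i`-th vertex of the path `t`. -/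
def pathHeight (t : List Bool) (i : ℕ) : ℤ :=
  ((t.take i).count true : ℤ) - ((t.take i).count false : ℤ)

/-- `s` lies weakly below `t` (for paths of the same semilength). -/
def WeaklyBelow (s t : List Bool) : Prop := ∀ i, pathHeight s i ≤ pathHeight t i

/-- The shape of a matching of `[2n]`: an east step for each opener, a south step for
each closer. -/
def shapeOf (n : ℕ) (M : Finset (ℕ × ℕ)) : List Bool :=
  (List.range (2 * n)).map fun x => decide ((x + 1) ∈ M.image Prod.fst)

/-- Number of returns of a path: south steps ending on the diagonal. -/
def returnsOf (t : List Bool) : ℕ :=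
  ((Finset.range t.length).filter fun i =>
    t[i]? = some false ∧ (t.take (i+1)).count true = (t.take (i+1)).count false).card

/-- Height sequence of a path, as natural numbers. -/
def hseq (t : List Bool) (i : ℕ) : ℕ := (t.take i).count true - (t.take i).count false

/-- `η(F)`: the number of indices `0 ≤ i ≤ 2n` with `h_i = 2`. -/
def etaOf (n : ℕ) (t : List Bool) : ℕ :=
  ((Finset.range (2 * n + 1)).filter fun i => hseq t i = 2).card

/-! ### Full rook placements on Ferrers boards -/

/-- The square in column `c`, row `r` (both 1-indexed from the bottom left) belongs to the
Ferrers board with border path `t ∈ F_n`. -/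
def InBoard (n : ℕ) (t : List Bool) (c r : ℕ) : Prop :=
  1 ≤ c ∧ 1 ≤ r ∧ ∃ i, c ≤ (t.take i).count true ∧ (t.take i).count false + r ≤ n

/-- `R` is a full rook placement on the Ferrers board with border path `t ∈ F_n`:
one rook in each of the `n` rows and `n` columns. -/
def IsFullRookPlacement (n : ℕ) (t : List Bool) (R : Finset (ℕ × ℕ)) : Prop :=
  (∀ p ∈ R, InBoard n t p.1 p.2) ∧
  (∀ c, 1 ≤ c → c ≤ n → ∃! p, p ∈ R ∧ p.1 = c) ∧
  (∀ r, 1 ≤ r → r ≤ n → ∃! p, p ∈ R ∧ p.2 = r)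

/-- The rooks of `R` lying in the rectangle `Γ(V_i)` determined by the `i`-th border vertex. -/
def rectRooks (n : ℕ) (t : List Bool) (R : Finset (ℕ × ℕ)) (i : ℕ) : Finset (ℕ × ℕ) :=
  R.filter fun p => p.1 ≤ (t.take i).count true ∧ p.2 + (t.take i).count false ≤ n

/-- Length of the longest increasing sequence (in both coordinates) in a finite point set. -/
def lisLen (S : Finset (ℕ × ℕ)) : ℕ :=
  (S.powerset.filter fun T => ∀ p ∈ T, ∀ q ∈ T, p.1 < q.1 → p.2 < q.2).sup Finset.card

/-- The full rook placement `R` on the board with border `t ∈ F_n` contains the pattern `τ`: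
some rectangle `Γ(V_i)` contains an occurrence of `τ`. -/
def PlacementContains {k : ℕ} (τ : Equiv.Perm (Fin k)) (n : ℕ) (t : List Bool)
    (R : Finset (ℕ × ℕ)) : Prop :=
  ∃ i ≤ 2 * n, ∃ f : Fin k → ℕ × ℕ,
    (∀ a, f a ∈ R ∧ (f a).1 ≤ (t.take i).count true ∧ (f a).2 + (t.take i).count false ≤ n) ∧
    (∀ a b : Fin k, a < b → (f a).1 < (f b).1) ∧
    (∀ a b : Fin k, τ a < τ b → (f a).2 < (f b).2)

def PlacementAvoids {k : ℕ} (τ : Equiv.Perm (Fin k)) (n : ℕ) (t : List Bool)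
    (R : Finset (ℕ × ℕ)) : Prop :=
  ¬ PlacementContains τ n t R

/-- `R` is board-minimal on the board with border `t`: every peak corner square holds a rook. -/
def BoardMinimal (n : ℕ) (t : List Bool) (R : Finset (ℕ × ℕ)) : Prop :=
  ∀ i, t[i]? = some true → t[i+1]? = some false →
    ((t.take (i+1)).count true, n - (t.take (i+1)).count false) ∈ R

/-- Board-minimal full rook placements on boards of `F_n` avoiding the pattern `σ`,
recorded as pairs (border path, rook set). -/
def MinPlacements (n : ℕ) {k : ℕ} (σ : Equiv.Perm (Fin k)) :
    Set (List Bool × Finset (ℕ × ℕ)) :=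
  {tR | IsDyckPath n tR.1 ∧ IsFullRookPlacement n tR.1 tR.2 ∧ BoardMinimal n tR.1 tR.2 ∧
        PlacementAvoids σ n tR.1 tR.2}

/-! ### Pattern avoidance in permutations -/

def PermContains {n k : ℕ} (τ : Equiv.Perm (Fin k)) (π : Equiv.Perm (Fin n)) : Prop :=
  ∃ f : Fin k → Fin n, StrictMono f ∧ ∀ a b : Fin k, τ a < τ b → π (f a) < π (f b)

def PermAvoids {n k : ℕ} (τ : Equiv.Perm (Fin k)) (π : Equiv.Perm (Fin n)) : Prop :=
  ¬ PermContains τ π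

/-- The full rook placement associated to a permutation of `[n]`. -/
def permPlacement {n : ℕ} (π : Equiv.Perm (Fin n)) : Finset (ℕ × ℕ) :=
  Finset.univ.image fun i : Fin n => ((i : ℕ) + 1, (π i : ℕ) + 1)

/-! ### Matchings with fixed points -/

/-- A (not necessarily perfect) matching on `{1, …, m}`: pairwise disjoint pairs. -/
def IsPartialMatching (m : ℕ) (M : Finset (ℕ × ℕ)) : Prop :=
  (∀ p ∈ M, p.1 < p.2 ∧ 1 ≤ p.1 ∧ p.2 ≤ m) ∧
  ∀ p ∈ M, ∀ q ∈ M, p ≠ q → p.1 ≠ q.1 ∧ p.1 ≠ q.2 ∧ p.2 ≠ q.1 ∧ p.2 ≠ q.2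

/-- The fixed points (unmatched vertices) of a matching on `{1, …, m}`. -/
def fixedPts (m : ℕ) (M : Finset (ℕ × ℕ)) : Finset ℕ :=
  (Finset.Icc 1 m).filter fun x => ∀ p ∈ M, p.1 ≠ x ∧ p.2 ≠ x

/-- The matched vertices of a matching on `{1, …, m}`. -/
def matchedSet (m : ℕ) (M : Finset (ℕ × ℕ)) : Finset ℕ :=
  (Finset.Icc 1 m).filter fun x => ∃ p ∈ M, p.1 = x ∨ p.2 = x

/-- The rank (1-based) of `x` inside the finset `S`. -/
def rankIn (S : Finset ℕ) (x : ℕ) : ℕ := (S.filter (· ≤ x)).card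

/-- The matching obtained by removing the fixed points and relabeling increasingly. -/
def relabeled (m : ℕ) (M : Finset (ℕ × ℕ)) : Finset (ℕ × ℕ) :=
  M.image fun p => (rankIn (matchedSet m M) p.1, rankIn (matchedSet m M) p.2)

/-! ### Set partitions -/

/-- `(i,j)` is an arc of the set partition `P` of `{1, …, n}`: `i < j` lie in a common block
with no element of that block strictly between them. -/
def PartArc {n : ℕ} (P : Finpartition (Finset.Icc 1 n)) (i j : ℕ) : Prop :=
  i < j ∧ ∃ B ∈ P.parts, i ∈ B ∧ j ∈ B ∧ ∀ x ∈ B, ¬(i < x ∧ x < j)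

/-- The set partition `P` contains the pattern `τ ∈ S_k`. -/
def PartContains {k n : ℕ} (τ : Equiv.Perm (Fin k)) (P : Finpartition (Finset.Icc 1 n)) : Prop :=
  ∃ f : Fin (2 * k) → ℕ, StrictMono f ∧
    ∀ a : Fin k,
      PartArc P (f ⟨a.1, by have := a.isLt; omega⟩)
        (f ⟨2 * k - 1 - (τ a).1, by have := (τ a).isLt; omega⟩)

def PartAvoids {k n : ℕ} (τ : Equiv.Perm (Fin k)) (P : Finpartition (Finset.Icc 1 n)) : Prop :=
  ¬ PartContains τ P

/-! ### Counting functions -/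

/-- `|M_n(τ)|`: the number of `τ`-avoiding perfect matchings of `[2n]`. -/
noncomputable def mcount {k : ℕ} (τ : Equiv.Perm (Fin k)) (n : ℕ) : ℕ :=
  {M : Finset (ℕ × ℕ) | IsPerfectMatching n M ∧ MatchAvoids τ M}.ncard

/-- `|M_n(σ,τ)|`: the number of perfect matchings of `[2n]` avoiding both `σ` and `τ`. -/
noncomputable def mcount2 {k : ℕ} (σ τ : Equiv.Perm (Fin k)) (n : ℕ) : ℕ :=
  {M : Finset (ℕ × ℕ) | IsPerfectMatching n M ∧ MatchAvoids σ M ∧ MatchAvoids τ M}.ncard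

/-- `|P_n(τ)|`: the number of `τ`-avoiding set partitions of `[n]`. -/
noncomputable def pcount {k : ℕ} (τ : Equiv.Perm (Fin k)) (n : ℕ) : ℕ :=
  Nat.card {P : Finpartition (Finset.Icc 1 n) // PartAvoids τ P}

/-- `|P_n(σ,τ)|`: the number of set partitions of `[n]` avoiding both `σ` and `τ`. -/
noncomputable def pcount2 {k : ℕ} (σ τ : Equiv.Perm (Fin k)) (n : ℕ) : ℕ :=
  Nat.card {P : Finpartition (Finset.Icc 1 n) // PartAvoids σ P ∧ PartAvoids τ P}

/-- `|S_n(τ)|`: the number of `τ`-avoiding permutations of `[n]`. -/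
noncomputable def scount {k : ℕ} (τ : Equiv.Perm (Fin k)) (n : ℕ) : ℕ :=
  Nat.card {π : Equiv.Perm (Fin n) // PermAvoids τ π}

/-!
Both families are counted by the nodes of one generating tree. Read a matching from left to right,
regarding a vertex as fixed until it is matched. A new vertex either stays fixed or closes an arc at
a fixed point `x`. Closing at `x` creates a forbidden configuration exactly when another fixed point
lies between `x` and the last opener, so if `r` of the `f` fixed points precede the last opener, the
`i` fixed points to the left of `x` may be any number with `r - 1 ≤ i < f`; afterwards there are
`f - 1` fixed points, `i` of them left of the last opener.

Without their final `k` south steps, the two paths end at height `k`. Remove the last step of the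
upper path, and from the lower path its last step if this step of the upper path goes east, its last
south step otherwise. What remains is a noncrossing pair ending at a common point. Conversely, a
south step may be put back into the final ascent of the lower path at every height `i + 1` between
the height `r` at which this ascent starts and the height `f` at which it ends, subject to
`i + 1 > 0`, and the new final ascent starts at height `i`. This is the same rule.
-/

/-! ### Generating trees -/

/-- A succession rule: an object labelled `l` has one child for each step `c` with `Allowed l c`,
and this child is labelled `next l c`. -/
structure SuccessionRule (L C : Type*) where
  root : L
  Allowed : L → C → Prop
  next : L → C → L

namespace SuccessionRule

variable {α β L C : Type*}

/-- The sets `X m` are the levels of a generating tree growing by the rule `R`: level `0` is a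
single root, and every object of level `m + 1` is `child m a c` for exactly one object `a` of
level `m` and one step `c` allowed by the label of `a`. -/
structure Generates (R : SuccessionRule L C) (X : ℕ → Set α) (label : ℕ → α → L)
    (child : ℕ → α → C → α) : Prop where
  zero : ∃ a, X 0 = {a} ∧ label 0 a = R.root
  bijOn_child (m : ℕ) : Set.BijOn (fun p : α × C => child m p.1 p.2)
    {p | p.1 ∈ X m ∧ R.Allowed (label m p.1) p.2} (X (m + 1))
  label_child (m : ℕ) (a : α) (c : C) : a ∈ X m → R.Allowed (label m a) c →
    label (m + 1) (child m a c) = R.next (label m a) c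

variable {R : SuccessionRule L C} {X : ℕ → Set α} {Y : ℕ → Set β} {labelX : ℕ → α → L}
  {labelY : ℕ → β → L} {childX : ℕ → α → C → α} {childY : ℕ → β → C → β}

theorem Generates.exists_equiv (hX : R.Generates X labelX childX)
    (hY : R.Generates Y labelY childY) (m : ℕ) :
    ∃ e : X m ≃ Y m, ∀ a, labelY m (e a) = labelX m a := by
  induction m with
  | zero =>
    obtain ⟨a, hXa, ha⟩ := hX.zero
    obtain ⟨b, hYb, hb⟩ := hY.zero
    rw [hXa, hYb]
    exact ⟨Equiv.ofUnique _ _, fun x => by rw [Unique.eq_default x]; exact hb.trans ha.symm⟩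
  | succ m ih =>
    obtain ⟨e, he⟩ := ih
    have he_symm (b : Y m) : labelX m (e.symm b) = labelY m b := by
      rw [← he, e.apply_symm_apply]
    let steps : {p : α × C | p.1 ∈ X m ∧ R.Allowed (labelX m p.1) p.2} ≃
        {p : β × C | p.1 ∈ Y m ∧ R.Allowed (labelY m p.1) p.2} :=
      { toFun p := ⟨(e ⟨p.1.1, p.2.1⟩, p.1.2), (e _).2, by rw [he]; exact p.2.2⟩
        invFun p := ⟨(e.symm ⟨p.1.1, p.2.1⟩, p.1.2), (e.symm _).2, by rw [he_symm]; exact p.2.2⟩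
        left_inv p := by simp
        right_inv p := by simp }
    refine ⟨((hX.bijOn_child m).equiv.symm.trans steps).trans (hY.bijOn_child m).equiv,
      (hX.bijOn_child m).equiv.surjective.forall.2 fun p => ?_⟩
    simp only [Equiv.trans_apply, Equiv.symm_apply_apply]
    have hq := (steps p).2
    have hl : labelY m (steps p).1.1 = labelX m p.1.1 := he _
    calc labelY (m + 1) (childY m (steps p).1.1 (steps p).1.2)
        = R.next (labelY m (steps p).1.1) p.1.2 := hY.label_child m _ _ hq.1 hq.2
      _ = R.next (labelX m p.1.1) p.1.2 := by rw [hl]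
      _ = labelX (m + 1) (childX m p.1.1 p.1.2) := (hX.label_child m _ _ p.2.1 p.2.2).symm

theorem Generates.ncard_eq (hX : R.Generates X labelX childX) (hY : R.Generates Y labelY childY)
    (m : ℕ) (q : L → Prop) :
    {a | a ∈ X m ∧ q (labelX m a)}.ncard = {b | b ∈ Y m ∧ q (labelY m b)}.ncard := by
  obtain ⟨e, he⟩ := hX.exists_equiv hY m
  refine Set.ncard_congr (fun a ha => e ⟨a, ha.1⟩) (fun a ha => ⟨(e _).2, ?_⟩)
    (fun a a' ha ha' h => ?_) (fun b hb => ?_)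
  · rw [he]
    exact ha.2
  · simpa [Subtype.coe_inj] using h
  · refine ⟨e.symm ⟨b, hb.1⟩, ⟨(e.symm _).2, ?_⟩, by simp⟩
    rw [← he, e.apply_symm_apply]
    exact hb.2

end SuccessionRule

/-- The rule shared by both families. On a matching the label is the number of fixed points together
with the number of fixed points left of the last opener, and `some i` matches a new last vertex with
the fixed point that has `i` fixed points on its left. On a pair of paths the label is the final
height together with the height after the last south step of the lower path, and `some i` makes
`i` the latter height. -/
def closingRule : SuccessionRule (ℕ × ℕ) (Option ℕ) where
  root := (0, 0)
  Allowed l c := ∀ i ∈ c, l.2 ≤ i + 1 ∧ i < l.1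
  next
    | l, none => (l.1 + 1, l.2)
    | l, some i => (l.1 - 1, i)


/-! ### Noncrossing pairs of lattice paths -/

section PathHeight

variable (t u v w : List Bool) (i j : ℕ)

theorem pathHeight_append :
    pathHeight (u ++ v) i = pathHeight u i + pathHeight v (i - u.length) := by
  simp only [pathHeight, List.take_append, List.count_append]
  push_cast
  ring

@[simp]
theorem pathHeight_replicate_true : pathHeight (List.replicate j true) i = min i j := by
  simp [pathHeight, List.take_replicate, List.count_replicate]

@[simp]
theorem pathHeight_replicate_false : pathHeight (List.replicate j false) i = -min i j := by
  simp [pathHeight, List.take_replicate, List.count_replicate]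

@[simp]
theorem pathHeight_singleton_true : pathHeight [true] i = min i 1 :=
  pathHeight_replicate_true i 1

@[simp]
theorem pathHeight_singleton_false : pathHeight [false] i = -min i 1 :=
  pathHeight_replicate_false i 1

@[simp]
theorem pathHeight_zero : pathHeight t 0 = 0 := by
  simp [pathHeight]

variable {t i} in
theorem pathHeight_of_length_le (h : t.length ≤ i) : pathHeight t i = pathHeight t t.length := by
  simp [pathHeight, List.take_of_length_le h]

theorem pathHeight_eq_append_min : pathHeight u i = pathHeight (u ++ v) (min i u.length) := by
  rw [pathHeight, pathHeight, List.take_append_of_le_length (min_le_right _ _),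
    ← List.take_eq_take_min]

theorem pathHeight_add_le : pathHeight t (i + j) ≤ pathHeight t i + j := by
  have h : ((t.drop i).take j).count true ≤ j :=
    List.count_le_length.trans (List.length_take_le _ _)
  simp only [pathHeight, List.take_add, List.count_append]
  omega

theorem pathHeight_nonneg_iff :
    0 ≤ pathHeight t i ↔ (t.take i).count false ≤ (t.take i).count true := by
  simp [pathHeight]

variable {u v} in
theorem weaklyBelow_append_right_iff (h : u.length = v.length) :
    WeaklyBelow (u ++ w) (v ++ w) ↔ WeaklyBelow u v := by
  simp only [WeaklyBelow, pathHeight_append, h, add_le_add_iff_right]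

end PathHeight

theorem isDyckPath_append_replicate_false_iff {n k : ℕ} {u : List Bool}
    (hu : u.length = 2 * n + k) :
    IsDyckPath (n + k) (u ++ List.replicate k false) ↔
      (∀ i, 0 ≤ pathHeight u i) ∧ pathHeight u u.length = k := by
  have hcount := u.count_true_add_count_false
  have hheight : pathHeight u u.length = u.count true - u.count false := by simp [pathHeight]
  have hlength : (u ++ List.replicate k false).length = 2 * (n + k) := by
    rw [List.length_append, List.length_replicate]
    omega
  have hopen : (u ++ List.replicate k false).count true = u.count true := by
    simp [List.count_replicate]
  simp only [IsDyckPath, hlength, hopen, ← pathHeight_nonneg_iff, true_and, pathHeight_append,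
    pathHeight_replicate_false]
  constructor
  · rintro ⟨hn, hpos⟩
    refine ⟨fun i => ?_, by omega⟩
    have := hpos i
    omega
  · rintro ⟨hpos, hend⟩
    refine ⟨by omega, fun i => ?_⟩
    rcases le_total i u.length with hi | hi
    · have := hpos i
      omega
    · rw [pathHeight_of_length_le hi, hend]
      omega

theorem IsDyckPath.exists_eq_append {n k : ℕ} {t : List Bool} (ht : IsDyckPath (n + k) t)
    (hdrop : t.drop (2 * (n + k) - k) = List.replicate k false) :
    ∃ u, u.length = 2 * n + k ∧ t = u ++ List.replicate k false := by
  refine ⟨t.take (2 * (n + k) - k), ?_, ?_⟩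
  · rw [List.length_take, ht.1]
    omega
  · rw [← hdrop, List.take_append_drop]

section Ascent

variable (s u : List Bool) (j : ℕ)

theorem eq_rdropWhile_append_replicate_true :
    ∃ j, s = s.rdropWhile id ++ List.replicate j true := by
  refine ⟨(s.rtakeWhile id).length, ?_⟩
  conv_lhs => rw [← List.rdropWhile_append_rtakeWhile (p := id) (l := s)]
  congr 1
  exact List.eq_replicate_of_mem fun b hb => List.mem_rtakeWhile_imp hb

theorem rdropWhile_append_replicate_true :
    (u ++ List.replicate j true).rdropWhile id = u.rdropWhile id := by
  induction j with
  | zero => simp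
  | succ j ih =>
    rw [List.replicate_succ', ← List.append_assoc, List.rdropWhile_concat_pos _ _ _ rfl, ih]

theorem eq_replicate_true_or_eq_append :
    (∃ j, s = List.replicate j true) ∨ ∃ u j, s = u ++ [false] ++ List.replicate j true := by
  obtain ⟨j, hj⟩ := eq_rdropWhile_append_replicate_true s
  rcases (s.rdropWhile id).eq_nil_or_concat' with hc | ⟨u, b, hc⟩
  · exact .inl ⟨j, by simpa [hc] using hj⟩
  · have hb : b = false := by
      have := List.rdropWhile_last_not id s (by simp [hc])
      simpa [hc] using this
    exact .inr ⟨u, j, by rw [← hb, ← hc]; exact hj⟩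

theorem append_false_append_replicate_true_inj {u u' : List Bool} {j j' : ℕ} :
    u ++ [false] ++ List.replicate j true = u' ++ [false] ++ List.replicate j' true ↔
      u = u' ∧ j = j' := by
  refine ⟨fun h => ?_, by rintro ⟨rfl, rfl⟩; rfl⟩
  have hu : u = u' := by
    have hconcat (v : List Bool) : (v ++ [false]).rdropWhile id = v ++ [false] :=
      List.rdropWhile_concat_neg _ _ _ (by simp)
    simpa only [rdropWhile_append_replicate_true, hconcat, List.append_left_inj]
      using congrArg (List.rdropWhile id) h
  subst hu
  simpa using congrArg List.length h

end Ascent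

/-- The height of a lattice path at its end, for paths that do not end below the diagonal. -/
def endHeight (t : List Bool) : ℕ := (pathHeight t t.length).toNat

/-- The height of a lattice path after its last south step, and `0` if there is none: it is read off
after deleting the final run of east steps. -/
def lastSouthHeight (t : List Bool) : ℕ := endHeight (t.rdropWhile id)

/-- Initial segments of noncrossing pairs of Dyck paths, both of length `m` and ending at the same
point. -/
structure IsNoncrossingPair (m : ℕ) (p : List Bool × List Bool) : Prop where
  length_fst : p.1.length = m
  length_snd : p.2.length = m
  nonneg : ∀ i, 0 ≤ pathHeight p.1 i
  weaklyBelow : WeaklyBelow p.1 p.2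
  end_eq : pathHeight p.1 m = pathHeight p.2 m

/-- The children of a noncrossing pair: both paths are extended by an east step, or the upper path
is extended by a south step while a south step is inserted into the final ascent of the lower one,
where it descends from height `i + 1` to height `i`. -/
def extendPair (p : List Bool × List Bool) : Option ℕ → List Bool × List Bool
  | none => (p.1 ++ [true], p.2 ++ [true])
  | some i =>
    let j := endHeight p.1 - 1 - i
    (p.1.rdrop j ++ false :: List.replicate j true, p.2 ++ [false])

section Labels

variable {s u : List Bool}

theorem nonneg_of_append {v : List Bool} (h : ∀ i, 0 ≤ pathHeight (u ++ v) i) (i : ℕ) :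
    0 ≤ pathHeight u i :=
  pathHeight_eq_append_min u v i ▸ h _

theorem endHeight_append_false (u : List Bool) : endHeight (u ++ [false]) = endHeight u - 1 := by
  simp only [endHeight, List.length_append, List.length_singleton, pathHeight_append,
    pathHeight_of_length_le (Nat.le_add_right u.length 1), pathHeight_singleton_false]
  omega

theorem endHeight_append_replicate_true (hu : 0 ≤ pathHeight u u.length) (j : ℕ) :
    endHeight (u ++ List.replicate j true) = endHeight u + j := by
  simp only [endHeight, List.length_append, List.length_replicate, pathHeight_append,
    pathHeight_of_length_le (Nat.le_add_right u.length j), pathHeight_replicate_true]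
  omega

theorem lastSouthHeight_append_replicate_true (u : List Bool) (j : ℕ) :
    lastSouthHeight (u ++ List.replicate j true) = lastSouthHeight u := by
  rw [lastSouthHeight, rdropWhile_append_replicate_true, lastSouthHeight]

theorem lastSouthHeight_append_false (u : List Bool) :
    lastSouthHeight (u ++ [false]) = endHeight u - 1 := by
  rw [lastSouthHeight, List.rdropWhile_concat_neg _ _ _ (by simp), endHeight_append_false]

theorem lastSouthHeight_le_endHeight (hs : ∀ i, 0 ≤ pathHeight s i) :
    lastSouthHeight s ≤ endHeight s := by
  obtain ⟨j, hj⟩ := eq_rdropWhile_append_replicate_true s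
  rw [lastSouthHeight]
  generalize s.rdropWhile id = c at hj ⊢
  subst hj
  rw [endHeight_append_replicate_true (nonneg_of_append hs _)]
  exact Nat.le_add_right _ _

theorem exists_eq_append_replicate_true (hs : ∀ i, 0 ≤ pathHeight s i) {h : ℕ}
    (hlow : lastSouthHeight s ≤ h) (hhigh : h ≤ endHeight s) :
    ∃ u j, s = u ++ List.replicate j true ∧ endHeight u = h := by
  obtain ⟨a, ha⟩ := eq_rdropWhile_append_replicate_true s
  rw [lastSouthHeight] at hlow
  generalize s.rdropWhile id = c at ha hlow
  subst ha
  have hc := nonneg_of_append hs c.length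
  rw [endHeight_append_replicate_true hc] at hhigh
  refine ⟨c ++ List.replicate (h - endHeight c) true, a - (h - endHeight c), ?_, ?_⟩
  · rw [List.append_assoc, ← List.replicate_add]
    congr 2
    omega
  · rw [endHeight_append_replicate_true hc]
    omega

theorem extendPair_some {i j : ℕ} (hs : ∀ k, 0 ≤ pathHeight (u ++ List.replicate j true) k)
    (hu : endHeight u = i + 1) (t : List Bool) :
    extendPair (u ++ List.replicate j true, t) (some i) =
      (u ++ [false] ++ List.replicate j true, t ++ [false]) := by
  have hj : endHeight (u ++ List.replicate j true) - 1 - i = (List.replicate j true).length := by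
    rw [endHeight_append_replicate_true (nonneg_of_append hs _), List.length_replicate]
    omega
  simp only [extendPair, hj, List.rdrop_append_length]
  simp

end Labels

namespace IsNoncrossingPair

variable {m j : ℕ} {s t u : List Bool} {p : List Bool × List Bool}

theorem append_true_iff :
    IsNoncrossingPair (m + 1) (s ++ [true], t ++ [true]) ↔ IsNoncrossingPair m (s, t) := by
  constructor
  · rintro ⟨hs, ht, hpos, hle, hend⟩
    simp only [List.length_append, List.length_singleton, add_left_inj] at hs ht hpos hle hend
    refine ⟨hs, ht, nonneg_of_append hpos,
      (weaklyBelow_append_right_iff _ (hs.trans ht.symm)).1 hle, ?_⟩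
    simpa [pathHeight_append, hs, ht, pathHeight_of_length_le (Nat.le_succ_of_le hs.le),
      pathHeight_of_length_le (Nat.le_succ_of_le ht.le)] using hend
  · rintro ⟨hs, ht, hpos, hle, hend⟩
    simp only at hs ht hpos hle hend
    refine ⟨by simp [hs], by simp [ht], fun i => ?_,
      (weaklyBelow_append_right_iff _ (hs.trans ht.symm)).2 hle, ?_⟩
    · have := hpos i
      simp only [pathHeight_append, pathHeight_singleton_true]
      omega
    · simpa [pathHeight_append, hs, ht, pathHeight_of_length_le (Nat.le_succ_of_le hs.le),
        pathHeight_of_length_le (Nat.le_succ_of_le ht.le)] using hend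

theorem of_append_false
    (h : IsNoncrossingPair (m + 1) (u ++ [false] ++ List.replicate j true, t ++ [false])) :
    IsNoncrossingPair m (u ++ List.replicate j true, t) ∧ 0 < endHeight u := by
  have hu_end {i : ℕ} (hi : u.length ≤ i) := pathHeight_of_length_le hi
  have ht_end {i : ℕ} (hi : t.length ≤ i) := pathHeight_of_length_le hi
  obtain ⟨hs, ht, hpos, hle, hend⟩ := h
  simp only [List.length_append, List.length_singleton, List.length_replicate, WeaklyBelow,
    pathHeight_append, pathHeight_singleton_false, pathHeight_replicate_true] at hs ht hpos hle hend
  have htm : t.length = m := by omega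
  rw [hu_end (by omega), ht_end (by omega)] at hend
  have hsouth := hpos (u.length + 1)
  rw [hu_end (Nat.le_succ _)] at hsouth
  have hsm : (u ++ List.replicate j true).length = m := by
    rw [List.length_append, List.length_replicate]
    omega
  refine ⟨⟨hsm, htm, fun i => ?_, fun i => ?_, ?_⟩, ?_⟩
  · have := hpos i
    simp only [pathHeight_append, pathHeight_replicate_true]
    omega
  · simp only [pathHeight_append, pathHeight_replicate_true]
    have hle_i := hle i
    rcases le_total i u.length with hi | hi
    · omega
    rw [hu_end hi]
    rcases le_total i m with him | him
    · have hclimb := pathHeight_add_le t i (m - i)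
      rw [Nat.add_sub_cancel' him, ht_end htm.le] at hclimb
      omega
    · rw [ht_end (by omega)]
      omega
  · simp only [pathHeight_append, pathHeight_replicate_true]
    rw [hu_end (by omega), ht_end (by omega)]
    omega
  · rw [endHeight]
    omega

theorem append_false (h : IsNoncrossingPair m (u ++ List.replicate j true, t))
    (hu : 0 < endHeight u) :
    IsNoncrossingPair (m + 1) (u ++ [false] ++ List.replicate j true, t ++ [false]) := by
  have hu_end {i : ℕ} (hi : u.length ≤ i) := pathHeight_of_length_le hi
  have ht_end {i : ℕ} (hi : t.length ≤ i) := pathHeight_of_length_le hi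
  obtain ⟨hs, ht, hpos, hle, hend⟩ := h
  simp only [List.length_append, List.length_replicate, WeaklyBelow,
    pathHeight_append, pathHeight_replicate_true] at hs ht hpos hle hend
  rw [hu_end (by omega), ht_end (by omega)] at hend
  rw [endHeight] at hu
  refine ⟨?_, by simp only [List.length_append, ht, List.length_singleton],
    fun i => ?_, fun i => ?_, ?_⟩
  all_goals simp only [pathHeight_append, pathHeight_singleton_false, pathHeight_replicate_true,
    List.length_append, List.length_singleton, List.length_replicate]
  · omega
  · have := hpos i
    rcases le_total i u.length with hi | hi
    · omega
    · rw [hu_end hi] at this ⊢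
      omega
  · have := hle i
    rcases le_total i m with hi | hi
    · omega
    · rw [hu_end (by omega), ht_end (by omega)] at this ⊢
      omega
  · rw [hu_end (by omega), ht_end (by omega)]
    omega

theorem eq_append_or_eq_append (h : IsNoncrossingPair (m + 1) p) :
    (∃ s t, p = (s ++ [true], t ++ [true])) ∨
      ∃ u j t, p = (u ++ [false] ++ List.replicate j true, t ++ [false]) := by
  obtain ⟨s, t⟩ := p
  obtain ⟨hs, ht, -, hle, hend⟩ := h
  simp only at hs ht hle hend
  obtain rfl | ⟨t, b, rfl⟩ := t.eq_nil_or_concat'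
  · simp at ht
  have htm : t.length = m := by simpa using ht
  have htend := pathHeight_of_length_le (i := m + 1) (htm.le.trans m.le_succ)
  cases b with
  | true =>
    obtain rfl | ⟨s, c, rfl⟩ := s.eq_nil_or_concat'
    · simp at hs
    have hsm : s.length = m := by simpa using hs
    have hsend := pathHeight_of_length_le (i := m + 1) (hsm.le.trans m.le_succ)
    cases c with
    | true => exact .inl ⟨s, t, rfl⟩
    | false =>
      have hle_m := hle m
      simp only [pathHeight_append, hsm, htm, pathHeight_singleton_true,
        pathHeight_singleton_false] at hle_m hend hsend htend
      omega
  | false =>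
    obtain ⟨j, rfl⟩ | ⟨u, j, rfl⟩ := eq_replicate_true_or_eq_append s
    · have hclimb := pathHeight_add_le t 0 m
      simp only [pathHeight_append, pathHeight_zero, htm, zero_add, List.length_replicate,
        pathHeight_replicate_true, pathHeight_singleton_false] at hclimb hs hend htend
      omega
    · exact .inr ⟨u, j, t, rfl⟩

end IsNoncrossingPair

section Generates

variable {m : ℕ} {p : List Bool × List Bool} {c : Option ℕ}

/-- The label of a pair of paths for the succession rule `closingRule`. -/
def pairLabel (p : List Bool × List Bool) : ℕ × ℕ := (endHeight p.1, lastSouthHeight p.1)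

theorem IsNoncrossingPair.exists_eq_of_allowed (hp : IsNoncrossingPair m p) {i : ℕ}
    (hi : closingRule.Allowed (pairLabel p) (some i)) :
    ∃ u j t, p = (u ++ List.replicate j true, t) ∧ endHeight u = i + 1 ∧
      extendPair p (some i) = (u ++ [false] ++ List.replicate j true, t ++ [false]) := by
  obtain ⟨s, t⟩ := p
  obtain ⟨hlow, hhigh⟩ := hi i rfl
  obtain ⟨u, j, rfl, hu⟩ := exists_eq_append_replicate_true hp.nonneg hlow hhigh
  exact ⟨u, j, t, rfl, hu, extendPair_some hp.nonneg hu t⟩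

theorem IsNoncrossingPair.extendPair (hp : IsNoncrossingPair m p)
    (hc : closingRule.Allowed (pairLabel p) c) : IsNoncrossingPair (m + 1) (extendPair p c) := by
  cases c with
  | none => exact append_true_iff.2 hp
  | some i =>
    obtain ⟨u, j, t, rfl, hu, hext⟩ := hp.exists_eq_of_allowed hc
    rw [hext]
    exact hp.append_false (by omega)

theorem pairLabel_extendPair (hp : IsNoncrossingPair m p)
    (hc : closingRule.Allowed (pairLabel p) c) :
    pairLabel (extendPair p c) = closingRule.next (pairLabel p) c := by
  cases c with
  | none =>
    exact Prod.ext (endHeight_append_replicate_true (hp.nonneg _) 1)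
      (lastSouthHeight_append_replicate_true _ 1)
  | some i =>
    obtain ⟨u, j, t, rfl, hu, hext⟩ := hp.exists_eq_of_allowed hc
    have hpos := (hp.extendPair hc).nonneg
    rw [hext] at hpos ⊢
    simp only [pairLabel, closingRule, lastSouthHeight_append_replicate_true,
      lastSouthHeight_append_false, endHeight_append_replicate_true (nonneg_of_append hpos _),
      endHeight_append_replicate_true (nonneg_of_append hp.nonneg _), endHeight_append_false, hu]
    ext <;> simp only <;> omega

theorem injOn_extendPair : Set.InjOn (fun q : (List Bool × List Bool) × Option ℕ =>
    extendPair q.1 q.2)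
    {q | IsNoncrossingPair m q.1 ∧ closingRule.Allowed (pairLabel q.1) q.2} := by
  rintro ⟨p, c⟩ ⟨hp, hc⟩ ⟨p', c'⟩ ⟨hp', hc'⟩ h
  simp only at hp hc hp' hc' h
  cases c with
  | none =>
    cases c' with
    | none => simpa [extendPair, Prod.ext_iff] using h
    | some i' => simp [extendPair] at h
  | some i =>
    cases c' with
    | none => simp [extendPair] at h
    | some i' =>
      obtain ⟨u, j, t, rfl, hu, hext⟩ := hp.exists_eq_of_allowed hc
      obtain ⟨u', j', t', rfl, hu', hext'⟩ := hp'.exists_eq_of_allowed hc'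
      rw [hext, hext', Prod.mk.injEq, append_false_append_replicate_true_inj,
        List.append_left_inj] at h
      obtain ⟨⟨rfl, rfl⟩, rfl⟩ := h
      simp only [Prod.mk.injEq, Option.some.injEq, true_and]
      omega

theorem surjOn_extendPair : Set.SurjOn (fun q : (List Bool × List Bool) × Option ℕ =>
    extendPair q.1 q.2)
    {q | IsNoncrossingPair m q.1 ∧ closingRule.Allowed (pairLabel q.1) q.2}
    {p | IsNoncrossingPair (m + 1) p} := by
  intro p hp
  obtain ⟨s, t, rfl⟩ | ⟨u, j, t, rfl⟩ := hp.eq_append_or_eq_append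
  · exact ⟨((s, t), none), ⟨IsNoncrossingPair.append_true_iff.1 hp, by simp [closingRule]⟩, rfl⟩
  · obtain ⟨hp', hu⟩ := IsNoncrossingPair.of_append_false hp
    have hu' : endHeight u = (endHeight u - 1) + 1 := by omega
    have hpos := nonneg_of_append hp'.nonneg
    refine ⟨((u ++ List.replicate j true, t), some (endHeight u - 1)), ⟨hp', ?_⟩,
      extendPair_some hp'.nonneg hu' t⟩
    have := lastSouthHeight_le_endHeight hpos
    simp only [closingRule, pairLabel, Option.mem_some_iff, forall_eq',
      lastSouthHeight_append_replicate_true, endHeight_append_replicate_true (hpos _)]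
    omega

theorem closingRule_generates_isNoncrossingPair :
    closingRule.Generates (fun m => {p | IsNoncrossingPair m p}) (fun _ => pairLabel)
      (fun _ => extendPair) where
  zero := by
    refine ⟨([], []), ?_, by simp [pairLabel, endHeight, lastSouthHeight, closingRule]⟩
    ext ⟨s, t⟩
    constructor
    · rintro ⟨hs, ht, -⟩
      simp_all
    · rintro ⟨⟩
      exact ⟨rfl, rfl, by simp [pathHeight], by simp [WeaklyBelow], rfl⟩
  bijOn_child m := ⟨fun q hq => hq.1.extendPair hq.2, injOn_extendPair, surjOn_extendPair⟩
  label_child m p c hp hc := pairLabel_extendPair hp hc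

end Generates

theorem isNoncrossingPair_and_endHeight_eq_iff {n k : ℕ} {u v : List Bool}
    (hu : u.length = 2 * n + k) (hv : v.length = 2 * n + k) :
    IsNoncrossingPair (2 * n + k) (u, v) ∧ endHeight u = k ↔
      IsDyckPath (n + k) (u ++ List.replicate k false) ∧
      IsDyckPath (n + k) (v ++ List.replicate k false) ∧
      WeaklyBelow (u ++ List.replicate k false) (v ++ List.replicate k false) := by
  rw [isDyckPath_append_replicate_false_iff hu, isDyckPath_append_replicate_false_iff hv,
    weaklyBelow_append_right_iff _ (hu.trans hv.symm), hu, hv]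
  constructor
  · rintro ⟨⟨-, -, hpos, hle, hend⟩, hk⟩
    simp only at hpos hle hend
    rw [endHeight, hu] at hk
    have huk : pathHeight u (2 * n + k) = k := by
      have := hpos (2 * n + k)
      omega
    exact ⟨⟨hpos, huk⟩, ⟨fun i => (hpos i).trans (hle i), hend.symm.trans huk⟩, hle⟩
  · rintro ⟨⟨hpos, huk⟩, ⟨-, hvk⟩, hle⟩
    exact ⟨⟨hu, hv, hpos, hle, huk.trans hvk.symm⟩, by rw [endHeight, hu, huk, Int.toNat_natCast]⟩

theorem ncard_dyckPath_pairs_eq (n k : ℕ) :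
    {D : List Bool × List Bool | IsDyckPath (n + k) D.1 ∧ IsDyckPath (n + k) D.2 ∧
      WeaklyBelow D.1 D.2 ∧
      D.1.drop (2 * (n + k) - k) = List.replicate k false ∧
      D.2.drop (2 * (n + k) - k) = List.replicate k false}.ncard =
    {p | IsNoncrossingPair (2 * n + k) p ∧ (pairLabel p).1 = k}.ncard := by
  let close (u : List Bool) := u ++ List.replicate k false
  have hclose : Function.Injective close := List.append_left_injective _
  refine (congrArg Set.ncard ?_).trans (Set.ncard_image_of_injective _ (hclose.prodMap hclose))
  ext ⟨D₀, D₁⟩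
  constructor
  · rintro ⟨h₀, h₁, hle, hdrop₀, hdrop₁⟩
    obtain ⟨u, hu, rfl⟩ := h₀.exists_eq_append hdrop₀
    obtain ⟨v, hv, rfl⟩ := h₁.exists_eq_append hdrop₁
    exact ⟨(u, v), (isNoncrossingPair_and_endHeight_eq_iff hu hv).2 ⟨h₀, h₁, hle⟩, rfl⟩
  · rintro ⟨⟨u, v⟩, hp, ⟨⟩⟩
    have hu : u.length = 2 * n + k := hp.1.length_fst
    have hv : v.length = 2 * n + k := hp.1.length_snd
    obtain ⟨h₀, h₁, hle⟩ := (isNoncrossingPair_and_endHeight_eq_iff hu hv).1 hp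
    have hlength : 2 * (n + k) - k = 2 * n + k := by omega
    exact ⟨h₀, h₁, hle, by simp only [hlength, close, List.drop_left' hu],
      by simp only [hlength, close, List.drop_left' hv]⟩

/-! ### Matchings with fixed points avoiding 213 -/

section Count

variable {p : ℕ → Prop} [DecidablePred p] {F : Finset ℕ} {a b i x : ℕ}

theorem count_le_count_iff : Nat.count p b ≤ Nat.count p a ↔ ∀ y < b, p y → y < a := by
  constructor
  · intro h y hyb hy
    by_contra! hay
    exact h.not_gt ((Nat.count_monotone p hay).trans_lt (Nat.count_strict_mono hy hyb))
  · intro h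
    by_contra! hlt
    obtain ⟨y, ⟨hay, hyb⟩, hy⟩ := Nat.exists_of_count_lt_count hlt
    exact hay.not_gt (h y hyb hy)

theorem count_mem_lt_card (hx : x ∈ F) : Nat.count (· ∈ F) x < F.card :=
  (Nat.count_lt_card (p := (· ∈ F)) F.finite_toSet hx).trans_eq (by simp)

theorem exists_nth_eq_of_lt_card (hi : i < F.card) :
    ∃ x ∈ F, Nat.count (· ∈ F) x = i ∧ Nat.nth (· ∈ F) i = x := by
  have hcard (hF : {y | y ∈ F}.Finite) : i < hF.toFinset.card := by
    simpa using hi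
  exact ⟨_, Nat.nth_mem i hcard, Nat.count_nth hcard, rfl⟩

end Count

theorem matchContains_p213_iff {M : Finset (ℕ × ℕ)} :
    MatchContains p213 M ↔ ∃ a b c d e g, a < b ∧ b < c ∧ c < d ∧ d < e ∧ e < g ∧
      (a, e) ∈ M ∧ (b, g) ∈ M ∧ (c, d) ∈ M := by
  constructor
  · rintro ⟨f, hf, hM⟩
    exact ⟨f 0, f 1, f 2, f 3, f 4, f 5, hf (by decide), hf (by decide), hf (by decide),
      hf (by decide), hf (by decide), hM 0, hM 1, hM 2⟩
  · rintro ⟨a, b, c, d, e, g, hab, hbc, hcd, hde, heg, hae, hbg, hcd'⟩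
    refine ⟨![a, b, c, d, e, g], Fin.strictMono_iff_lt_succ.2 fun i => ?_, fun i => ?_⟩
    · fin_cases i <;> simpa
    · fin_cases i
      exacts [hae, hbg, hcd']

section PartialMatching

variable {m x : ℕ} {M : Finset (ℕ × ℕ)}

theorem mem_fixedPts : x ∈ fixedPts m M ↔ (1 ≤ x ∧ x ≤ m) ∧ ∀ p ∈ M, p.1 ≠ x ∧ p.2 ≠ x := by
  rw [fixedPts, Finset.mem_filter, Finset.mem_Icc]

theorem fixedPts_insert_arc :
    fixedPts (m + 1) (insert (x, m + 1) M) = (fixedPts m M).erase x := by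
  ext y
  simp only [Finset.mem_erase, mem_fixedPts, Finset.forall_mem_insert]
  constructor
  · rintro ⟨hym, hyx, hyM⟩
    exact ⟨by omega, by omega, hyM⟩
  · rintro ⟨hyx, hym, hyM⟩
    exact ⟨by omega, by omega, hyM⟩

namespace IsPartialMatching

theorem lt_and_le (hM : IsPartialMatching m M) {a b : ℕ} (hab : (a, b) ∈ M) : a < b ∧ b ≤ m :=
  ⟨(hM.1 _ hab).1, (hM.1 _ hab).2.2⟩

theorem eq_of_endpoint (hM : IsPartialMatching m M) {p q : ℕ × ℕ} (hp : p ∈ M) (hq : q ∈ M)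
    (hpx : p.1 = x ∨ p.2 = x) (hqx : q.1 = x ∨ q.2 = x) : p = q := by
  by_contra hpq
  have := hM.2 p hp q hq hpq
  omega

theorem succ (hM : IsPartialMatching m M) : IsPartialMatching (m + 1) M :=
  ⟨fun p hp => ⟨(hM.1 p hp).1, (hM.1 p hp).2.1, Nat.le_succ_of_le (hM.1 p hp).2.2⟩, hM.2⟩

theorem notMem_of_lt (hM : IsPartialMatching m M) {a b : ℕ} (hb : m < b) : (a, b) ∉ M :=
  fun h => (hM.lt_and_le h).2.not_gt hb

theorem insert_arc (hM : IsPartialMatching m M) (hx : x ∈ fixedPts m M) :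
    IsPartialMatching (m + 1) (insert (x, m + 1) M) := by
  obtain ⟨hxm, hxM⟩ := mem_fixedPts.1 hx
  have hdisjoint (p) (hp : p ∈ M) := And.intro (hM.1 p hp) (hxM p hp)
  constructor
  · simp only [Finset.forall_mem_insert]
    exact ⟨⟨by omega, hxm.1, le_rfl⟩, hM.succ.1⟩
  · simp only [Finset.forall_mem_insert, ne_eq, not_true_eq_false, false_imp_iff, true_and]
    refine ⟨fun q hq _ => ?_, fun p hp => ⟨fun _ => ?_, hM.2 p hp⟩⟩
    · have := hdisjoint q hq
      omega
    · have := hdisjoint p hp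
      omega

theorem fixedPts_succ (hM : IsPartialMatching m M) :
    fixedPts (m + 1) M = insert (m + 1) (fixedPts m M) := by
  ext y
  rw [Finset.mem_insert, mem_fixedPts, mem_fixedPts]
  constructor
  · rintro ⟨hym, hyM⟩
    rcases Nat.lt_or_ge m y with hy | hy
    · exact .inl (by omega)
    · exact .inr ⟨⟨hym.1, hy⟩, hyM⟩
  · rintro (rfl | ⟨hym, hyM⟩)
    · refine ⟨by omega, fun p hp => ?_⟩
      have := hM.1 p hp
      omega
    · exact ⟨by omega, hyM⟩

theorem of_forall_snd_ne (hM : IsPartialMatching (m + 1) M) (h : ∀ p ∈ M, p.2 ≠ m + 1) :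
    IsPartialMatching m M :=
  ⟨fun p hp => ⟨(hM.1 p hp).1, (hM.1 p hp).2.1,
    Nat.le_of_lt_succ ((hM.1 p hp).2.2.lt_of_ne (h p hp))⟩, hM.2⟩

theorem erase_arc (hM : IsPartialMatching (m + 1) M) (hx : (x, m + 1) ∈ M) :
    IsPartialMatching m (M.erase (x, m + 1)) ∧ x ∈ fixedPts m (M.erase (x, m + 1)) := by
  have hdisjoint (p) (hp : p ∈ M.erase (x, m + 1)) :=
    hM.2 p (Finset.mem_of_mem_erase hp) _ hx (Finset.ne_of_mem_erase hp)
  have herase : IsPartialMatching (m + 1) (M.erase (x, m + 1)) :=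
    ⟨fun p hp => hM.1 p (Finset.mem_of_mem_erase hp), fun p hp q hq =>
      hM.2 p (Finset.mem_of_mem_erase hp) q (Finset.mem_of_mem_erase hq)⟩
  have hxm := hM.1 _ hx
  exact ⟨herase.of_forall_snd_ne fun p hp => (hdisjoint p hp).2.2.2,
    mem_fixedPts.2 ⟨⟨hxm.2.1, Nat.le_of_lt_succ hxm.1⟩,
      fun p hp => ⟨(hdisjoint p hp).1, (hdisjoint p hp).2.2.1⟩⟩⟩

theorem insert_arc_inj {x' : ℕ} {M' : Finset (ℕ × ℕ)} (hM : IsPartialMatching m M)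
    (hM' : IsPartialMatching m M') :
    insert (x, m + 1) M = insert (x', m + 1) M' ↔ x = x' ∧ M = M' := by
  refine ⟨fun h => ?_, by rintro ⟨rfl, rfl⟩; rfl⟩
  have hnotMem (y : ℕ) : (y, m + 1) ∉ M := hM.notMem_of_lt m.lt_succ_self
  have hnotMem' (y : ℕ) : (y, m + 1) ∉ M' := hM'.notMem_of_lt m.lt_succ_self
  have hx : (x, m + 1) ∈ insert (x', m + 1) M' := h ▸ Finset.mem_insert_self _ _
  obtain rfl : x = x' := by simpa [hnotMem'] using hx
  exact ⟨rfl, by rw [← Finset.erase_insert (hnotMem x), h, Finset.erase_insert (hnotMem' x)]⟩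

end IsPartialMatching

end PartialMatching

/-- The matchings of `[m]` with fixed points that belong to `M_n^k(213)` for some `n` and `k`.
Deleting fixed points does not affect pattern containment, so avoidance is imposed on `M` itself. -/
structure IsAdmissible (m : ℕ) (M : Finset (ℕ × ℕ)) : Prop where
  isPartialMatching : IsPartialMatching m M
  avoids : MatchAvoids p213 M
  notMem_fixedPts (x1 x2 x3 x4 x5 : ℕ) : x1 < x2 → x2 < x3 → x3 < x4 → x4 < x5 →
    (x1, x5) ∈ M → (x3, x4) ∈ M → x2 ∉ fixedPts m M

/-- The label of a matching of `[m]` for the succession rule `closingRule`; the last opener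
`M.sup Prod.fst` is `0` if `M` is empty. -/
def matchingLabel (m : ℕ) (M : Finset (ℕ × ℕ)) : ℕ × ℕ :=
  ((fixedPts m M).card, Nat.count (· ∈ fixedPts m M) (M.sup Prod.fst))

/-- The children of a matching of `[m]`: the new vertex `m + 1` is a fixed point, or it is matched
with the fixed point that has `i` fixed points on its left. -/
noncomputable def extendMatching (m : ℕ) (M : Finset (ℕ × ℕ)) : Option ℕ → Finset (ℕ × ℕ)
  | none => M
  | some i => insert (Nat.nth (· ∈ fixedPts m M) i, m + 1) M

section Admissible

variable {m x : ℕ} {M : Finset (ℕ × ℕ)}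

theorem forall_le_iff_count_le (hx : x ∈ fixedPts m M) :
    (∀ y ∈ fixedPts m M, y < M.sup Prod.fst → y ≤ x) ↔
      (matchingLabel m M).2 ≤ Nat.count (· ∈ fixedPts m M) x + 1 := by
  have hcount : Nat.count (· ∈ fixedPts m M) (x + 1) = Nat.count (· ∈ fixedPts m M) x + 1 := by
    rw [Nat.count_succ, if_pos hx]
  rw [matchingLabel, ← hcount, count_le_count_iff]
  simp only [Nat.lt_succ_iff]
  exact ⟨fun h y hy hyF => h y hyF hy, fun h y hyF hy => h y hy hyF⟩

theorem isAdmissible_succ_iff (hM : IsPartialMatching m M) :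
    IsAdmissible (m + 1) M ↔ IsAdmissible m M := by
  refine ⟨fun h => ⟨hM, h.avoids, fun x1 x2 x3 x4 x5 h12 h23 h34 h45 h15 h34' hx2 => ?_⟩,
    fun h => ⟨hM.succ, h.avoids, fun x1 x2 x3 x4 x5 h12 h23 h34 h45 h15 h34' hx2 => ?_⟩⟩
  · refine h.notMem_fixedPts x1 x2 x3 x4 x5 h12 h23 h34 h45 h15 h34' ?_
    rw [hM.fixedPts_succ]
    exact Finset.mem_insert_of_mem hx2
  · rw [hM.fixedPts_succ, Finset.mem_insert] at hx2
    have := hM.lt_and_le h15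
    exact h.notMem_fixedPts x1 x2 x3 x4 x5 h12 h23 h34 h45 h15 h34' (hx2.resolve_left (by omega))

namespace IsAdmissible

theorem of_insert (hM : IsPartialMatching m M) (h : IsAdmissible (m + 1) (insert (x, m + 1) M)) :
    IsAdmissible m M := by
  refine ⟨hM, fun hcontains => h.avoids ?_,
    fun x1 x2 x3 x4 x5 h12 h23 h34 h45 h15 h34' hx2 => ?_⟩
  · obtain ⟨f, hf, hfM⟩ := hcontains
    exact ⟨f, hf, fun a => Finset.mem_insert_of_mem (hfM a)⟩
  have h15' := Finset.mem_insert_of_mem (b := (x, m + 1)) h15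
  have h34'' := Finset.mem_insert_of_mem (b := (x, m + 1)) h34'
  by_cases hx : x2 = x
  · subst hx
    have := hM.lt_and_le h15
    exact h.avoids (matchContains_p213_iff.2 ⟨x1, x2, x3, x4, x5, m + 1, h12, h23, h34, h45,
      by omega, h15', Finset.mem_insert_self _ _, h34''⟩)
  · refine h.notMem_fixedPts x1 x2 x3 x4 x5 h12 h23 h34 h45 h15' h34'' ?_
    rw [fixedPts_insert_arc]
    exact Finset.mem_erase.2 ⟨hx, hx2⟩

theorem le_of_insert (hM : IsPartialMatching m M)
    (h : IsAdmissible (m + 1) (insert (x, m + 1) M)) :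
    ∀ y ∈ fixedPts m M, y < M.sup Prod.fst → y ≤ x := by
  intro y hy hlt
  obtain ⟨⟨a, b⟩, hab, hya⟩ := Finset.lt_sup_iff.1 hlt
  by_contra! hxy
  have := hM.lt_and_le hab
  refine h.notMem_fixedPts x y a b (m + 1) hxy hya this.1 (by omega)
    (Finset.mem_insert_self _ _) (Finset.mem_insert_of_mem hab) ?_
  rw [fixedPts_insert_arc]
  exact Finset.mem_erase.2 ⟨hxy.ne', hy⟩

theorem insert_arc (h : IsAdmissible m M) (hx : x ∈ fixedPts m M)
    (hle : ∀ y ∈ fixedPts m M, y < M.sup Prod.fst → y ≤ x) :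
    IsAdmissible (m + 1) (insert (x, m + 1) M) := by
  have hM := h.isPartialMatching
  have hmem {a b : ℕ} (hb : b ≤ m) : (a, b) ∈ insert (x, m + 1) M ↔ (a, b) ∈ M := by
    rw [Finset.mem_insert, Prod.mk.injEq, or_iff_right (by omega)]
  have hsnd {a b : ℕ} (hab : (a, b) ∈ insert (x, m + 1) M) : b ≤ m + 1 :=
    ((hM.insert_arc hx).lt_and_le hab).2
  refine ⟨hM.insert_arc hx, fun hcontains => ?_,
    fun x1 x2 x3 x4 x5 h12 h23 h34 h45 h15 h34' hx2 => ?_⟩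
  · obtain ⟨a, b, c, d, e, g, hab, hbc, hcd, hde, heg, hae, hbg, hcd'⟩ :=
      matchContains_p213_iff.1 hcontains
    have := hsnd hbg
    rw [hmem (by omega)] at hae hcd'
    rw [Finset.mem_insert, Prod.mk.injEq] at hbg
    obtain ⟨rfl, rfl⟩ | hbg := hbg
    · exact h.notMem_fixedPts a b c d e hab hbc hcd hde hae hcd' hx
    · exact h.avoids (matchContains_p213_iff.2
        ⟨a, b, c, d, e, g, hab, hbc, hcd, hde, heg, hae, hbg, hcd'⟩)
  · have := hsnd h15
    rw [hmem (by omega)] at h34'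
    rw [fixedPts_insert_arc, Finset.mem_erase] at hx2
    rw [Finset.mem_insert, Prod.mk.injEq] at h15
    obtain ⟨rfl, rfl⟩ | h15 := h15
    · exact h12.not_ge (hle x2 hx2.2 (Finset.lt_sup_iff.2 ⟨_, h34', h23⟩))
    · exact h.notMem_fixedPts x1 x2 x3 x4 x5 h12 h23 h34 h45 h15 h34' hx2.2

end IsAdmissible

theorem matchingLabel_succ (hM : IsPartialMatching m M) :
    matchingLabel (m + 1) M = ((matchingLabel m M).1 + 1, (matchingLabel m M).2) := by
  have hnotMem : m + 1 ∉ fixedPts m M := by simp [mem_fixedPts]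
  have hsup : M.sup Prod.fst ≤ m + 1 := Finset.sup_le fun p hp => by
    have := hM.1 p hp
    omega
  simp only [matchingLabel, hM.fixedPts_succ, Finset.card_insert_of_notMem hnotMem,
    Nat.count_eq_card_filter_range]
  congr 2
  ext y
  simp only [Finset.mem_filter, Finset.mem_range, Finset.mem_insert]
  exact and_congr_right fun hy => or_iff_right (hy.trans_le hsup).ne

theorem matchingLabel_insert_arc (hx : x ∈ fixedPts m M)
    (hle : ∀ y ∈ fixedPts m M, y < M.sup Prod.fst → y ≤ x) :
    matchingLabel (m + 1) (insert (x, m + 1) M) =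
      ((matchingLabel m M).1 - 1, Nat.count (· ∈ fixedPts m M) x) := by
  simp only [matchingLabel, fixedPts_insert_arc, Finset.card_erase_of_mem hx, Finset.sup_insert,
    Nat.count_eq_card_filter_range]
  congr 2
  ext y
  simp only [Finset.mem_filter, Finset.mem_range, Finset.mem_erase, lt_sup_iff]
  constructor
  · rintro ⟨hlt | hlt, hne, hy⟩
    · exact ⟨hlt, hy⟩
    · exact ⟨(hle y hy hlt).lt_of_ne hne, hy⟩
  · rintro ⟨hlt, hy⟩
    exact ⟨.inl hlt, hlt.ne, hy⟩

end Admissible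

section Generates

variable {m : ℕ} {M : Finset (ℕ × ℕ)} {c : Option ℕ}

theorem exists_extendMatching_eq_insert {i : ℕ}
    (hi : closingRule.Allowed (matchingLabel m M) (some i)) :
    ∃ x ∈ fixedPts m M, Nat.count (· ∈ fixedPts m M) x = i ∧
      (∀ y ∈ fixedPts m M, y < M.sup Prod.fst → y ≤ x) ∧
      extendMatching m M (some i) = insert (x, m + 1) M := by
  obtain ⟨hlow, hhigh⟩ := hi i rfl
  obtain ⟨x, hx, rfl, hnth⟩ := exists_nth_eq_of_lt_card (F := fixedPts m M) hhigh
  exact ⟨x, hx, rfl, (forall_le_iff_count_le hx).2 hlow, by rw [extendMatching, hnth]⟩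

theorem IsAdmissible.extendMatching (hM : IsAdmissible m M)
    (hc : closingRule.Allowed (matchingLabel m M) c) :
    IsAdmissible (m + 1) (extendMatching m M c) := by
  cases c with
  | none => exact (isAdmissible_succ_iff hM.isPartialMatching).2 hM
  | some i =>
    obtain ⟨x, hx, -, hle, hext⟩ := exists_extendMatching_eq_insert hc
    exact hext ▸ hM.insert_arc hx hle

theorem matchingLabel_extendMatching (hM : IsPartialMatching m M)
    (hc : closingRule.Allowed (matchingLabel m M) c) :
    matchingLabel (m + 1) (extendMatching m M c) = closingRule.next (matchingLabel m M) c := by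
  cases c with
  | none => exact matchingLabel_succ hM
  | some i =>
    obtain ⟨x, hx, rfl, hle, hext⟩ := exists_extendMatching_eq_insert hc
    rw [hext, matchingLabel_insert_arc hx hle]
    rfl

theorem injOn_extendMatching : Set.InjOn (fun q : Finset (ℕ × ℕ) × Option ℕ =>
    extendMatching m q.1 q.2)
    {q | IsAdmissible m q.1 ∧ closingRule.Allowed (matchingLabel m q.1) q.2} := by
  rintro ⟨M, c⟩ ⟨hM, hc⟩ ⟨M', c'⟩ ⟨hM', hc'⟩ h
  replace hM := hM.isPartialMatching
  replace hM' := hM'.isPartialMatching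
  simp only at hM hc hM' hc' h
  have hnotMem {N : Finset (ℕ × ℕ)} (hN : IsPartialMatching m N) {N' : Finset (ℕ × ℕ)} {x : ℕ} :
      N ≠ insert (x, m + 1) N' :=
    fun h => hN.notMem_of_lt m.lt_succ_self (h ▸ Finset.mem_insert_self _ _)
  cases c with
  | none =>
    cases c' with
    | none => exact Prod.ext h rfl
    | some i' => exact absurd h (hnotMem hM)
  | some i =>
    cases c' with
    | none => exact absurd h.symm (hnotMem hM')
    | some i' =>
      obtain ⟨x, _, rfl, -, hext⟩ := exists_extendMatching_eq_insert hc
      obtain ⟨x', _, rfl, -, hext'⟩ := exists_extendMatching_eq_insert hc'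
      rw [hext, hext', hM.insert_arc_inj hM'] at h
      obtain ⟨rfl, rfl⟩ := h
      rfl

theorem surjOn_extendMatching : Set.SurjOn (fun q : Finset (ℕ × ℕ) × Option ℕ =>
    extendMatching m q.1 q.2)
    {q | IsAdmissible m q.1 ∧ closingRule.Allowed (matchingLabel m q.1) q.2}
    {M | IsAdmissible (m + 1) M} := by
  intro M hM
  by_cases hlast : ∀ p ∈ M, p.2 ≠ m + 1
  · have hM' := hM.isPartialMatching.of_forall_snd_ne hlast
    exact ⟨(M, none), ⟨(isAdmissible_succ_iff hM').1 hM, by simp [closingRule]⟩, rfl⟩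
  · push Not at hlast
    obtain ⟨⟨x, b⟩, hxb, rfl⟩ := hlast
    obtain ⟨hN, hx⟩ := hM.isPartialMatching.erase_arc hxb
    have hinsert := Finset.insert_erase hxb
    generalize M.erase (x, m + 1) = N at hN hx hinsert
    subst hinsert
    refine ⟨(N, some (Nat.count (· ∈ fixedPts m N) x)), ⟨.of_insert hN hM, ?_⟩, ?_⟩
    · rintro i ⟨⟩
      exact ⟨(forall_le_iff_count_le hx).1 (IsAdmissible.le_of_insert hN hM), count_mem_lt_card hx⟩
    · simp only [extendMatching]
      rw [Nat.nth_count hx]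

theorem closingRule_generates_isAdmissible :
    closingRule.Generates (fun m => {M | IsAdmissible m M}) matchingLabel extendMatching where
  zero := by
    refine ⟨∅, ?_, rfl⟩
    ext M
    constructor
    · refine fun hM => Finset.eq_empty_of_forall_notMem fun p hp => ?_
      have := hM.isPartialMatching.1 p hp
      omega
    · rintro rfl
      exact ⟨by simp [IsPartialMatching], fun h => by simpa using matchContains_p213_iff.1 h,
        by simp⟩
  bijOn_child m := ⟨fun q hq => hq.1.extendMatching hq.2, injOn_extendMatching,
    surjOn_extendMatching⟩
  label_child m M c hM hc := matchingLabel_extendMatching hM.isPartialMatching hc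

end Generates

/-! ### Deleting the fixed points -/

section Relabeling

variable {m n k : ℕ} {M : Finset (ℕ × ℕ)} {S : Finset ℕ}

theorem forall_of_forall_pattern (τ : Equiv.Perm (Fin k)) {P : Fin (2 * k) → Prop}
    (h : ∀ a : Fin k, P ⟨a, by omega⟩ ∧ P ⟨2 * k - 1 - τ a, by omega⟩) (j : Fin (2 * k)) : P j := by
  rcases lt_or_ge j.1 k with hj | hj
  · exact (h ⟨j, hj⟩).1
  · convert (h (τ.symm ⟨2 * k - 1 - j, by omega⟩)).2 using 1
    ext
    simp only [Equiv.apply_symm_apply]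
    omega

theorem matchContains_image_iff (τ : Equiv.Perm (Fin k)) {r : ℕ → ℕ} (hr : StrictMonoOn r S)
    (hM : ∀ p ∈ M, p.1 ∈ S ∧ p.2 ∈ S) :
    MatchContains τ (M.image fun p => (r p.1, r p.2)) ↔ MatchContains τ M := by
  constructor
  · rintro ⟨f, hf, hfM⟩
    simp only [Finset.mem_image, Prod.mk.injEq] at hfM
    choose p hpM hp₁ hp₂ using hfM
    choose g hgS hg using forall_of_forall_pattern τ (P := fun j => ∃ y ∈ S, r y = f j)
      fun a => ⟨⟨_, (hM _ (hpM a)).1, hp₁ a⟩, ⟨_, (hM _ (hpM a)).2, hp₂ a⟩⟩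
    refine ⟨g, fun i j hij => (hr.lt_iff_lt (hgS i) (hgS j)).1 ?_, fun a => ?_⟩
    · rw [hg, hg]
      exact hf hij
    · convert hpM a using 1
      exact Prod.ext (hr.injOn (hgS _) (hM _ (hpM a)).1 ((hg _).trans (hp₁ a).symm))
        (hr.injOn (hgS _) (hM _ (hpM a)).2 ((hg _).trans (hp₂ a).symm))
  · rintro ⟨f, hf, hfM⟩
    have hfS := forall_of_forall_pattern τ (P := fun j => f j ∈ S) fun a => hM _ (hfM a)
    exact ⟨r ∘ f, fun i j hij => hr (hfS i) (hfS j) (hf hij),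
      fun a => Finset.mem_image_of_mem (fun p => (r p.1, r p.2)) (hfM a)⟩

theorem strictMonoOn_rankIn (S : Finset ℕ) : StrictMonoOn (rankIn S) S := by
  intro x _ y hy hxy
  refine Finset.card_lt_card (Finset.ssubset_iff_of_subset
    (Finset.monotone_filter_right S fun z _ hz => hz.trans hxy.le) |>.2 ⟨y, ?_, ?_⟩)
  · simpa using hy
  · simp [hxy]

theorem image_rankIn (S : Finset ℕ) : S.image (rankIn S) = Finset.Icc 1 S.card := by
  refine Finset.eq_of_subset_of_card_le (fun z hz => ?_) ?_
  · obtain ⟨x, hx, rfl⟩ := Finset.mem_image.1 hz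
    exact Finset.mem_Icc.2 ⟨Finset.card_pos.2 ⟨x, by simp [hx]⟩, Finset.card_filter_le _ _⟩
  · rw [Finset.card_image_of_injOn (strictMonoOn_rankIn S).injOn, Nat.card_Icc,
      Nat.add_sub_cancel]

theorem card_matchedSet_add_card_fixedPts (m : ℕ) (M : Finset (ℕ × ℕ)) :
    (matchedSet m M).card + (fixedPts m M).card = m := by
  have hfixed : fixedPts m M =
      (Finset.Icc 1 m).filter fun x => ¬ ∃ p ∈ M, p.1 = x ∨ p.2 = x := by
    simp only [fixedPts, not_exists, not_and, not_or, ne_eq]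
  rw [hfixed, matchedSet, Finset.card_filter_add_card_filter_not, Nat.card_Icc,
    Nat.add_sub_cancel]

namespace IsPartialMatching

theorem mem_matchedSet (hM : IsPartialMatching m M) {p : ℕ × ℕ} (hp : p ∈ M) :
    p.1 ∈ matchedSet m M ∧ p.2 ∈ matchedSet m M := by
  have := hM.1 p hp
  simp only [matchedSet, Finset.mem_filter, Finset.mem_Icc]
  exact ⟨⟨by omega, p, hp, .inl rfl⟩, ⟨by omega, p, hp, .inr rfl⟩⟩

theorem matchContains_relabeled_iff (hM : IsPartialMatching m M) (τ : Equiv.Perm (Fin k)) :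
    MatchContains τ (relabeled m M) ↔ MatchContains τ M :=
  matchContains_image_iff τ (strictMonoOn_rankIn _) fun _ => hM.mem_matchedSet

theorem isPerfectMatching_relabeled (hM : IsPartialMatching m M)
    (hn : 2 * n + (fixedPts m M).card = m) : IsPerfectMatching n (relabeled m M) := by
  have hcard : (matchedSet m M).card = 2 * n := by
    have := card_matchedSet_add_card_fixedPts m M
    omega
  have hrank := strictMonoOn_rankIn (matchedSet m M)
  have himage := image_rankIn (matchedSet m M)
  rw [hcard] at himage
  have hbounds {x : ℕ} (hx : x ∈ matchedSet m M) :=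
    Finset.mem_Icc.1 (himage ▸ Finset.mem_image_of_mem _ hx)
  rw [relabeled]
  constructor
  · simp only [Finset.forall_mem_image]
    intro p hp
    obtain ⟨h₁, h₂⟩ := hM.mem_matchedSet hp
    exact ⟨hrank h₁ h₂ (hM.1 p hp).1, (hbounds h₁).1, (hbounds h₂).2⟩
  · intro y hy hyn
    obtain ⟨x, hx, rfl⟩ := Finset.mem_image.1 (himage.symm ▸ Finset.mem_Icc.2 ⟨hy, hyn⟩)
    obtain ⟨p, hp, hpx⟩ := (Finset.mem_filter.1 hx).2
    refine ⟨_, ⟨Finset.mem_image_of_mem _ hp, by rcases hpx with rfl | rfl <;> simp⟩, ?_⟩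
    rintro _ ⟨hmem, hqx⟩
    obtain ⟨q, hqM, rfl⟩ := Finset.mem_image.1 hmem
    obtain ⟨h₁, h₂⟩ := hM.mem_matchedSet hqM
    rw [hM.eq_of_endpoint hqM hp (hqx.imp (hrank.injOn h₁ hx) (hrank.injOn h₂ hx)) hpx]

end IsPartialMatching

end Relabeling

theorem isAdmissible_and_card_fixedPts_eq_iff {n k : ℕ} {M : Finset (ℕ × ℕ)} :
    IsAdmissible (2 * n + k) M ∧ (matchingLabel (2 * n + k) M).1 = k ↔
      IsPartialMatching (2 * n + k) M ∧ (fixedPts (2 * n + k) M).card = k ∧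
      IsPerfectMatching n (relabeled (2 * n + k) M) ∧
      MatchAvoids p213 (relabeled (2 * n + k) M) ∧
      ∀ x1 x2 x3 x4 x5 : ℕ, x1 < x2 → x2 < x3 → x3 < x4 → x4 < x5 →
        (x1, x5) ∈ M → (x3, x4) ∈ M → x2 ∉ fixedPts (2 * n + k) M := by
  constructor
  · rintro ⟨⟨hM, havoid, hfixed⟩, hk⟩
    exact ⟨hM, hk, hM.isPerfectMatching_relabeled (congrArg (2 * n + ·) hk),
      mt (hM.matchContains_relabeled_iff p213).1 havoid, hfixed⟩
  · rintro ⟨hM, hk, -, havoid, hfixed⟩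
    exact ⟨⟨hM, mt (hM.matchContains_relabeled_iff p213).2 havoid, hfixed⟩, hk⟩

/-- `|M_n^k(213)|` equals the number of pairs `(D_0, D_1)` of noncrossing
Dyck paths of semilength `n + k` both ending with `k` south steps. -/
theorem card_Mnk213_eq_card_noncrossing_pairs (n k : ℕ) :
    {M : Finset (ℕ × ℕ) |
        IsPartialMatching (2 * n + k) M ∧ (fixedPts (2 * n + k) M).card = k ∧
        IsPerfectMatching n (relabeled (2 * n + k) M) ∧
        MatchAvoids p213 (relabeled (2 * n + k) M) ∧
        ∀ x1 x2 x3 x4 x5 : ℕ, x1 < x2 → x2 < x3 → x3 < x4 → x4 < x5 →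
          (x1, x5) ∈ M → (x3, x4) ∈ M → x2 ∉ fixedPts (2 * n + k) M}.ncard =
    {st : List Bool × List Bool |
        IsDyckPath (n + k) st.1 ∧ IsDyckPath (n + k) st.2 ∧ WeaklyBelow st.1 st.2 ∧
        st.1.drop (2 * (n + k) - k) = List.replicate k false ∧
        st.2.drop (2 * (n + k) - k) = List.replicate k false}.ncard := by
  have hgrowth := closingRule_generates_isAdmissible.ncard_eq
    closingRule_generates_isNoncrossingPair (2 * n + k) (fun l => l.1 = k)
  rw [ncard_dyckPath_pairs_eq]
  simp only [← isAdmissible_and_card_fixedPts_eq_iff]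
  exact hgrowth
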